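/- For every real t with 0 < t < 1, the function K(t) = −2 + 6t + 6·(1 − t − π²/9)·ln(1−t) − 2·(1 − t − ln(t))·ln²(1−t) − 2·(t − (1+t)·ln(1−t))·Li₂(t) + t·Li₂(t)² + 4·Li₃(1−t) has derivative K′(t) = Li₂(t)². -/

import Mathlib

open Real

/-- The polylogarithm `Li s x = ∑_{k=1}^∞ x^k / k^s` for real `x` with `|x| < 1`. -/
noncomputable def Li (s : ℕ) (x : ℝ) : ℝ := ∑' k : ℕ, x ^ (k + 1) / ((k : ℝ) + 1) ^ s

/-- `ζ(3) = ∑_{k=1}^∞ 1/k³`. -/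
noncomputable def zeta3 : ℝ := ∑' k : ℕ, 1 / ((k : ℝ) + 1) ^ 3

open Filter Topology

lemma hasDerivAt_Li_succ (s : ℕ) {x : ℝ} (hx0 : x ≠ 0) (hx : |x| < 1) :
    HasDerivAt (Li (s + 1)) (Li s x / x) x := by
  obtain ⟨r, hxr, hr1⟩ := exists_between hx
  have hr0 : 0 ≤ r := (abs_nonneg x).trans hxr.le
  have hxmem : x ∈ Metric.ball (0 : ℝ) r := by simpa using hxr
  have key : HasDerivAt (fun z : ℝ => ∑' k : ℕ, z ^ (k + 1) / ((k : ℝ) + 1) ^ (s + 1))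
      (∑' k : ℕ, x ^ k / ((k : ℝ) + 1) ^ s) x := by
    refine hasDerivAt_tsum_of_isPreconnected (u := fun k : ℕ => r ^ k) (y₀ := 0)
      (g' := fun (k : ℕ) (z : ℝ) => z ^ k / ((k : ℝ) + 1) ^ s)
      (summable_geometric_of_lt_one hr0 hr1) Metric.isOpen_ball
      (convex_ball (0 : ℝ) r).isPreconnected ?_ ?_
      (Metric.mem_ball_self ((abs_nonneg x).trans_lt hxr)) ?_ hxmem
    · intro k z _
      have hk : (k : ℝ) + 1 ≠ 0 := by positivity
      refine ((hasDerivAt_pow (k + 1) z).div_const (((k : ℝ) + 1) ^ (s + 1))).congr_deriv ?_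
      push_cast
      field_simp
      ring
    · intro k z hz
      have hz : |z| < r := by simpa using hz
      have hk : (1 : ℝ) ≤ ((k : ℝ) + 1) ^ s := one_le_pow₀ (by simp)
      rw [norm_div, norm_pow, Real.norm_eq_abs, Real.norm_of_nonneg (zero_le_one.trans hk)]
      exact (div_le_self (by positivity) hk).trans (by gcongr)
    · simp
  refine key.congr_deriv ?_
  rw [Li, ← tsum_div_const]
  refine tsum_congr fun k => ?_
  field_simp
  ring

lemma Li_one {x : ℝ} (hx : |x| < 1) : Li 1 x = -log (1 - x) := by
  simpa [Li] using (hasSum_pow_div_log_of_abs_lt_one hx).tsum_eq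

lemma continuousOn_Li_two : ContinuousOn (Li 2) (Set.Icc 0 1) := by
  have hsum : Summable fun k : ℕ => 1 / ((k : ℝ) + 1) ^ 2 := by
    simpa using (summable_nat_add_iff 1).2 hasSum_zeta_two.summable
  refine continuousOn_tsum (fun k => by fun_prop) hsum fun k x hx => ?_
  rw [Real.norm_of_nonneg (by have := hx.1; positivity)]
  have := pow_le_one₀ (n := k + 1) hx.1 hx.2
  gcongr

lemma Li_two_zero : Li 2 0 = 0 := by simp [Li]

lemma Li_two_one : Li 2 1 = π ^ 2 / 6 := by
  have h := (hasSum_nat_add_iff' (f := fun n : ℕ => (1 : ℝ) / (n : ℝ) ^ 2) 1).2 hasSum_zeta_two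
  simpa [Li] using h.tsum_eq

lemma tendsto_log_mul_log_one_sub :
    Tendsto (fun x : ℝ => log x * log (1 - x)) (𝓝[>] 0) (𝓝 0) := by
  have hd : HasDerivAt (fun x : ℝ => log (1 - x)) (-1) 0 := by
    simpa using ((hasDerivAt_id (0 : ℝ)).const_sub 1).log (by simp)
  have hs : Tendsto (fun x : ℝ => x⁻¹ * log (1 - x)) (𝓝[>] 0) (𝓝 (-1)) := by
    simpa using hd.tendsto_slope_zero_right
  have hm : Tendsto (fun x : ℝ => x * log x) (𝓝[>] 0) (𝓝 0) := by
    simpa using (continuous_mul_log.tendsto 0).mono_left nhdsWithin_le_nhds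
  have hprod := hm.mul hs
  rw [zero_mul] at hprod
  refine hprod.congr' ?_
  filter_upwards [self_mem_nhdsWithin] with x hx
  have : x ≠ 0 := ne_of_gt hx
  field_simp

/-- Derivative of the dilogarithm on `(0, 1)`. -/
lemma hasDerivAt_Li_two {x : ℝ} (h0 : 0 < x) (h1 : x < 1) :
    HasDerivAt (Li 2) (-log (1 - x) / x) x := by
  have hx : |x| < 1 := by rwa [abs_of_pos h0]
  simpa [Li_one hx] using hasDerivAt_Li_succ 1 h0.ne' hx

lemma hasDerivAt_log_one_sub {x : ℝ} (h1 : x < 1) :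
    HasDerivAt (fun y : ℝ => log (1 - y)) (-1 / (1 - x)) x :=
  ((hasDerivAt_id x).const_sub 1).log (sub_pos.2 h1).ne'

/-- Euler's reflection formula for the dilogarithm. -/
lemma Li_two_add_Li_two_one_sub {t : ℝ} (h0 : 0 < t) (h1 : t < 1) :
    Li 2 t + Li 2 (1 - t) + log t * log (1 - t) = π ^ 2 / 6 := by
  set F : ℝ → ℝ := fun x => Li 2 x + Li 2 (1 - x) + log x * log (1 - x)
  have hderiv : ∀ x ∈ Set.Ioo (0 : ℝ) 1, HasDerivAt F 0 x := by
    rintro x ⟨hx0, hx1⟩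
    have hx1' : 0 < 1 - x := sub_pos.2 hx1
    have hrefl : HasDerivAt (fun y : ℝ => Li 2 (1 - y)) (-log (1 - (1 - x)) / (1 - x) * -1) x :=
      (hasDerivAt_Li_two hx1' (by linarith)).comp x ((hasDerivAt_id x).const_sub 1)
    refine (((hasDerivAt_Li_two hx0 hx1).add hrefl).add
      ((hasDerivAt_log hx0.ne').mul (hasDerivAt_log_one_sub hx1))).congr_deriv ?_
    rw [sub_sub_cancel]
    field_simp
    ring
  have hconst : ∀ x ∈ Set.Ioo (0 : ℝ) 1, F x = F t := fun x hx =>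
    isOpen_Ioo.is_const_of_deriv_eq_zero isPreconnected_Ioo
      (fun y hy => (hderiv y hy).differentiableAt.differentiableWithinAt)
      (fun y hy => (hderiv y hy).deriv) hx ⟨h0, h1⟩
  have hIoo : Set.Ioo (0 : ℝ) 1 ∈ 𝓝[>] (0 : ℝ) := Ioo_mem_nhdsGT one_pos
  have hmaps : Tendsto (fun x : ℝ => x) (𝓝[>] 0) (𝓝[Set.Icc 0 1] 0) :=
    tendsto_nhdsWithin_iff.2 ⟨nhdsWithin_le_nhds, by
      filter_upwards [hIoo] with x hx using ⟨hx.1.le, hx.2.le⟩⟩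
  have hmaps' : Tendsto (fun x : ℝ => 1 - x) (𝓝[>] 0) (𝓝[Set.Icc 0 1] 1) := by
    refine tendsto_nhdsWithin_iff.2 ⟨?_, by
      filter_upwards [hIoo] with x hx using ⟨by linarith [hx.2], by linarith [hx.1]⟩⟩
    have : Continuous fun x : ℝ => 1 - x := by fun_prop
    simpa using (this.tendsto 0).mono_left nhdsWithin_le_nhds
  have hlim : Tendsto F (𝓝[>] 0) (𝓝 (Li 2 0 + Li 2 1 + 0)) :=
    (((continuousOn_Li_two 0 (by simp)).tendsto.comp hmaps).add
      ((continuousOn_Li_two 1 (by simp)).tendsto.comp hmaps')).add tendsto_log_mul_log_one_sub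
  have hlim' : Tendsto F (𝓝[>] 0) (𝓝 (F t)) :=
    tendsto_const_nhds.congr' (by filter_upwards [hIoo] with x hx using (hconst x hx).symm)
  have := tendsto_nhds_unique hlim' hlim
  rwa [Li_two_zero, Li_two_one, zero_add, add_zero] at this

theorem stmt_10 (t : ℝ) (h1 : 0 < t) (h2 : t < 1) :
    HasDerivAt (fun t : ℝ =>
      -2 + 6 * t + 6 * (1 - t - π ^ 2 / 9) * Real.log (1 - t)
        - 2 * (1 - t - Real.log t) * Real.log (1 - t) ^ 2
        - 2 * (t - (1 + t) * Real.log (1 - t)) * Li 2 t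
        + t * (Li 2 t) ^ 2 + 4 * Li 3 (1 - t))
      ((Li 2 t) ^ 2) t := by
  have ht : 0 < 1 - t := sub_pos.2 h2
  have hid := hasDerivAt_id' t
  have hL := hasDerivAt_log_one_sub h2
  have hD := hasDerivAt_Li_two h1 h2
  have hT : HasDerivAt (fun y : ℝ => Li 3 (1 - y)) (Li 2 (1 - t) / (1 - t) * -1) t :=
    (hasDerivAt_Li_succ 2 ht.ne' (by rw [abs_of_pos ht]; linarith)).comp t (hid.const_sub 1)
  have hlog := hasDerivAt_log h1.ne'
  have hK := (((((((hid.const_mul 6).const_add (-2)).add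
    ((((hid.const_sub 1).sub_const (π ^ 2 / 9)).const_mul 6).mul hL)).sub
    ((((hid.const_sub 1).sub hlog).const_mul 2).mul (hL.pow 2))).sub
    (((hid.sub ((hid.const_add 1).mul hL)).const_mul 2).mul hD)).add
    (hid.mul (hD.pow 2))).add (hT.const_mul 4))
  refine hK.congr_deriv ?_
  have hR : Li 2 (1 - t) = π ^ 2 / 6 - log t * log (1 - t) - Li 2 t := by
    linarith [Li_two_add_Li_two_one_sub h1 h2]
  simp only [hR, Pi.pow_apply, Pi.sub_apply, Pi.mul_apply]
  field_simp
  ring
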